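/- Let D be a strong digraph of order n ≥ 3 in which n−1 vertices have degree at least n. Then D is Hamiltonian or D contains a directed cycle of length n−1; moreover, D has a directed cycle that contains all the vertices of degree at least n. -/

import Mathlib

/-! A digraph on a vertex type `V` is given by its arc relation `A : V → V → Prop`
(this automatically forbids multiple arcs); looplessness is expressed by the
hypothesis `Irreflexive A`. -/

/-- The degree of `x`: its out-degree plus its in-degree. -/
noncomputable def degree {V : Type*} (A : V → V → Prop) (x : V) : ℕ :=
  {y | A x y}.ncard + {y | A y x}.ncard

/-- `degreeIn A x S` is the number of arcs between `x` and vertices of `S`,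
in both directions. -/
noncomputable def degreeIn {V : Type*} (A : V → V → Prop) (x : V) (S : Set V) : ℕ :=
  {y ∈ S | A x y}.ncard + {y ∈ S | A y x}.ncard

/-- `c : Fin m → V` is a directed cycle of length `m` (indices taken mod `m`). -/
def IsCycle {V : Type*} (A : V → V → Prop) {m : ℕ} (c : Fin m → V) : Prop :=
  2 ≤ m ∧ Function.Injective c ∧
    ∀ i : Fin m, A (c i) (c ⟨(i.val + 1) % m, Nat.mod_lt _ i.pos⟩)

/-- `p : Fin m → V` is a directed path on `m` vertices (of length `m - 1`). -/
def IsPath {V : Type*} (A : V → V → Prop) {m : ℕ} (p : Fin m → V) : Prop :=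
  Function.Injective p ∧ ∀ (i : Fin m) (h : i.val + 1 < m), A (p i) (p ⟨i.val + 1, h⟩)

/-- A digraph is Hamiltonian if it has a directed cycle through all of its vertices. -/
def IsHamiltonian {V : Type*} [Fintype V] (A : V → V → Prop) : Prop :=
  ∃ c : Fin (Fintype.card V) → V, IsCycle A c ∧ Function.Surjective c

/-- Reachability by a directed path staying inside the set `S`. -/
def ReachIn {V : Type*} (A : V → V → Prop) (S : Set V) : V → V → Prop :=
  Relation.ReflTransGen (fun u v => u ∈ S ∧ v ∈ S ∧ A u v)

/-- A digraph is strong if every vertex is reachable from every other by a directed path. -/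
def IsStrong {V : Type*} (A : V → V → Prop) : Prop :=
  ∀ x y : V, Relation.ReflTransGen A x y

/-- A digraph is `k`-strong if it has at least `k + 1` vertices and the deletion of
any set of at most `k - 1` vertices leaves a strong digraph. -/
def IsKStrong {V : Type*} [Fintype V] (A : V → V → Prop) (k : ℕ) : Prop :=
  k + 1 ≤ Fintype.card V ∧
    ∀ S : Set V, S.ncard ≤ k - 1 → ∀ x ∈ Sᶜ, ∀ y ∈ Sᶜ, ReachIn A Sᶜ x y

open Classical in
/-- The number of arcs joining `x` and `w`, in both directions. -/
noncomputable def arcCount {V : Type*} (A : V → V → Prop) (x w : V) : ℕ :=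
  (if A x w then 1 else 0) + (if A w x then 1 else 0)

theorem arcCount_le_two {V : Type*} (A : V → V → Prop) (x w : V) : arcCount A x w ≤ 2 := by
  unfold arcCount; split_ifs <;> omega

theorem arcCount_eq_zero {V : Type*} {A : V → V → Prop} {x w : V} (h₁ : ¬ A x w)
    (h₂ : ¬ A w x) : arcCount A x w = 0 := by
  simp [arcCount, h₁, h₂]

theorem degree_eq_sum_arcCount {V : Type*} [Fintype V] (A : V → V → Prop) (x : V) :
    degree A x = ∑ w, arcCount A x w := by
  classical
  simp only [degree, arcCount, Finset.sum_add_distrib, Set.ncard_eq_toFinset_card',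
    Set.toFinset_ofPred, Finset.card_filter]

theorem degree_swap {V : Type*} (A : V → V → Prop) (x : V) :
    degree (fun a b => A b a) x = degree A x := by
  simp only [degree]; omega

theorem finite_setOf_nodup {V : Type*} [Fintype V] : {l : List V | l.Nodup}.Finite := by
  classical
  exact Set.finite_coe_iff.1 (inferInstanceAs (Finite {l : List V // l.Nodup}))

open Classical in
theorem sum_ite_notMem_le_one {V : Type*} {M : Set V} (hM : Mᶜ.Subsingleton) (s : Finset V) :
    ∑ a ∈ s, (if a ∈ M then 0 else 1) ≤ 1 := by
  have : ∑ a ∈ s, (if a ∈ M then 0 else 1) = (s.filter (· ∉ M)).card := by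
    rw [Finset.card_filter]
    exact Finset.sum_congr rfl fun a _ => by split_ifs <;> rfl
  rw [this, Finset.card_le_one]
  exact fun a ha b hb => hM (Finset.mem_filter.1 ha).2 (Finset.mem_filter.1 hb).2

/-- A vertex that cannot be inserted between two consecutive vertices of a sequence `l`
is joined to `l` by at most `l.length + 1` arcs. -/
theorem sum_arcCount_le_of_not_insertable {V : Type*} (A : V → V → Prop) (u : V) (l : List V)
    (h : ∀ s a b t, l = s ++ a :: b :: t → ¬ (A a u ∧ A u b)) :
    (l.map (arcCount A u)).sum ≤ l.length + 1 := by
  classical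
  have key : ∀ (l : List V) (a : V),
      (∀ s c b t, a :: l = s ++ c :: b :: t → ¬ (A c u ∧ A u b)) →
      ((a :: l).map (arcCount A u)).sum ≤ (if A u a then 1 else 0) + l.length + 1 := by
    intro l
    induction l with
    | nil =>
      intro a _
      simp only [arcCount, List.map_cons, List.map_nil, List.sum_cons, List.sum_nil,
        List.length_nil]
      split_ifs <;> omega
    | cons b l ih =>
      intro a h
      have h₁ := ih b fun s c d t hs => h (a :: s) c d t (by simp [hs])
      have h₂ := h [] a b l rfl
      rw [List.map_cons, List.sum_cons, List.length_cons]
      have h₃ : arcCount A u a = (if A u a then 1 else 0) + (if A a u then 1 else 0) := rfl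
      split_ifs at * <;> first | omega | tauto
  cases l with
  | nil => simp
  | cons a l =>
    have := key l a h
    rw [List.length_cons]
    split_ifs at this <;> omega

/-- The vertices of `l`, in this order, form a directed cycle. -/
def IsListCycle {V : Type*} (A : V → V → Prop) (l : List V) : Prop :=
  l ≠ [] ∧ l.Nodup ∧ l.IsChain A ∧ ∀ x ∈ l.getLast?, ∀ y ∈ l.head?, A x y

theorem IsListCycle.append_comm {V : Type*} {A : V → V → Prop} {l₁ l₂ : List V}
    (h : IsListCycle A (l₁ ++ l₂)) : IsListCycle A (l₂ ++ l₁) := by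
  obtain ⟨h₀, h₁, h₂, h₃⟩ := h
  rw [List.isChain_append] at h₂
  refine ⟨by simpa [and_comm] using h₀, (List.perm_append_comm.nodup_iff).1 h₁, ?_, ?_⟩
  · refine List.isChain_append.2 ⟨h₂.2.1, h₂.1, fun x hx y hy => h₃ x ?_ y ?_⟩
    · rw [List.getLast?_append]; simp_all
    · rw [List.head?_append]; simp_all
  · intro x hx y hy
    rcases eq_or_ne l₁ [] with rfl | hl₁
    · simp_all
    rcases eq_or_ne l₂ [] with rfl | hl₂
    · simp_all
    apply h₂.2.2 x _ y _
    · rwa [List.getLast?_append_of_ne_nil _ hl₁] at hx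
    · rwa [List.head?_append_of_ne_nil _ hl₂] at hy

theorem IsListCycle.reverse {V : Type*} {A : V → V → Prop} {l : List V}
    (h : IsListCycle (fun a b => A b a) l) : IsListCycle A l.reverse := by
  obtain ⟨h₀, h₁, h₂, h₃⟩ := h
  refine ⟨by simpa using h₀, List.nodup_reverse.2 h₁, List.isChain_reverse.2 h₂, ?_⟩
  intro x hx y hy
  exact h₃ y (by simpa using hy) x (by simpa using hx)

/-- Replacing the closing arc of a path `T` by a path `P` disjoint from it. -/
theorem IsListCycle.of_append {V : Type*} {A : V → V → Prop} {T P : List V} {x y v w : V}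
    (hT : T.Nodup) (hTc : T.IsChain A) (hTh : T.head? = some y) (hTl : T.getLast? = some x)
    (hP : P.Nodup) (hPc : P.IsChain A) (hPh : P.head? = some v) (hPl : P.getLast? = some w)
    (hd : T.Disjoint P) (hxv : A x v) (hwy : A w y) : IsListCycle A (T ++ P) := by
  refine ⟨?_, List.Nodup.append hT hP hd, List.isChain_append.2 ⟨hTc, hPc, ?_⟩, ?_⟩
  · rintro h
    simp_all
  · simp_all
  · rw [List.getLast?_append, List.head?_append]
    simp_all

theorem isChain_insert {V : Type*} {A : V → V → Prop} {s t : List V} {a b u : V}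
    (h : (s ++ a :: b :: t).IsChain A) (hau : A a u) (hub : A u b) :
    (s ++ a :: u :: b :: t).IsChain A := by
  rw [List.isChain_append] at h ⊢
  simp_all [List.isChain_cons_cons]

theorem IsListCycle.insert {V : Type*} {A : V → V → Prop} {s t : List V} {a b u : V}
    (h : IsListCycle A (s ++ a :: b :: t)) (hu : u ∉ s ++ a :: b :: t) (hau : A a u)
    (hub : A u b) : IsListCycle A (s ++ a :: u :: b :: t) := by
  obtain ⟨-, h₁, h₂, h₃⟩ := h
  refine ⟨by simp, ?_, isChain_insert h₂ hau hub, ?_⟩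
  · have : (s ++ a :: u :: b :: t).Perm (u :: (s ++ a :: b :: t)) := by
      simpa using List.perm_middle (a := u) (l₁ := s ++ [a]) (l₂ := b :: t)
    exact this.nodup_iff.2 (List.nodup_cons.2 ⟨hu, h₁⟩)
  · simpa [List.getLast?_append, List.head?_append, List.getLast?_cons] using h₃

/-- Reachability inside `S` is witnessed by a path inside `S`. -/
theorem ReachIn.exists_path {V : Type*} {A : V → V → Prop} {S : Set V} {a b : V}
    (h : ReachIn A S a b) (hb : b ∈ S) :
    ∃ P : List V, P.Nodup ∧ P.IsChain A ∧ P.head? = some a ∧ P.getLast? = some b ∧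
      ∀ x ∈ P, x ∈ S := by
  induction h using Relation.ReflTransGen.head_induction_on with
  | refl => exact ⟨[b], by simp, by simp, rfl, rfl, by simpa⟩
  | @head a c hac _ ih =>
    obtain ⟨P, h₁, h₂, h₃, h₄, h₅⟩ := ih
    by_cases ha : a ∈ P
    · obtain ⟨s, t, rfl⟩ := List.append_of_mem ha
      refine ⟨a :: t, h₁.of_append_right, h₂.right_of_append, rfl, ?_, fun x hx => h₅ x ?_⟩
      · rwa [List.getLast?_append_of_ne_nil _ (by simp)] at h₄
      · exact List.mem_append_right _ hx
    · refine ⟨a :: P, List.nodup_cons.2 ⟨ha, h₁⟩, ?_, rfl, ?_, ?_⟩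
      · refine List.isChain_cons.2 ⟨fun y hy => ?_, h₂⟩
        rw [h₃] at hy
        obtain rfl : c = y := by simpa using hy
        exact hac.2.2
      · rw [List.getLast?_cons, h₄]; rfl
      · intro x hx
        rcases List.mem_cons.1 hx with rfl | hx
        · exact hac.1
        · exact h₅ x hx

theorem exists_reachIn_compl {V : Type*} {A : V → V → Prop} {S : Set V} {v c : V}
    (h : Relation.ReflTransGen A v c) (hv : v ∉ S) (hc : c ∈ S) :
    ∃ w y, ReachIn A Sᶜ v w ∧ w ∉ S ∧ A w y ∧ y ∈ S := by
  induction h using Relation.ReflTransGen.head_induction_on with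
  | refl => exact absurd hc hv
  | @head a b hac _ ih =>
    by_cases hb : b ∈ S
    · exact ⟨a, b, .refl, hv, hac, hb⟩
    · obtain ⟨w, y, h₁, h₂⟩ := ih hb
      exact ⟨w, y, .head ⟨hv, hb, hac⟩ h₁, h₂⟩

open Classical in
/-- Let `L ++ G` be a directed cycle with as many vertices in `M` as possible, where at most
one vertex lies outside `M` and all vertices of `M` have large degree.  Then no path leaves the
last vertex of `L` for a vertex of `M` outside the cycle and returns to the cycle at the first
vertex of `L`. -/
theorem not_bypass {V : Type*} [Fintype V] {A : V → V → Prop} {M : Set V}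
    (hirr : ∀ x, ¬ A x x) (hM : Mᶜ.Subsingleton)
    (hdeg : ∀ v ∈ M, Fintype.card V ≤ degree A v) {k : ℕ}
    (hmax : ∀ l, IsListCycle A l → l.countP (· ∈ M) ≤ k) (m : ℕ) :
    ∀ (L G : List V) (x y v w : V), G.length = m → IsListCycle A (L ++ G) →
      k ≤ (L ++ G).countP (· ∈ M) → L.head? = some y → L.getLast? = some x → v ∈ M →
      v ∉ L ++ G → A x v → ReachIn A {a | a ∉ L ++ G} v w → w ∉ L ++ G → A w y → False := by
  induction m using Nat.strong_induction_on with
  | _ m ih =>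
  intro L G x y v w hm hC hk hLh hLl hvM hvC hxv hvw hwC hwy
  -- a vertex of the gap is neither the end nor the start of a shorter bypass
  have hto : ∀ u ∈ G, ∀ w', ReachIn A {a | a ∉ L ++ G} v w' → w' ∉ L ++ G → ¬ A w' u := by
    intro u hu w' hvw' hw'C hw'u
    obtain ⟨G₁, G₂, rfl⟩ := List.append_of_mem hu
    have hset : ∀ a, a ∉ (u :: G₂ ++ L) ++ G₁ ↔ a ∉ L ++ (G₁ ++ u :: G₂) := by
      intro a; simp only [List.mem_append, List.mem_cons]; tauto
    have hp : ((u :: G₂ ++ L) ++ G₁).Perm (L ++ (G₁ ++ u :: G₂)) := by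
      rw [List.append_assoc, ← List.append_assoc L]
      exact List.perm_append_comm
    refine ih G₁.length (by simp at hm; omega) (u :: G₂ ++ L) G₁ x u v w' rfl ?_ ?_ rfl ?_ hvM
      ((hset v).2 hvC) hxv ?_ ((hset w').2 hw'C) hw'u
    · rw [List.append_assoc]
      exact IsListCycle.append_comm (by simpa using hC)
    · rwa [hp.countP_eq]
    · rw [List.getLast?_append, hLl]; rfl
    · simpa only [hset] using hvw'
  have hfrom : ∀ u ∈ G, ∀ v' ∈ M, v' ∉ L ++ G → ReachIn A {a | a ∉ L ++ G} v' v → ¬ A u v' := by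
    intro u hu v' hv'M hv'C hv'v huv'
    obtain ⟨G₁, G₂, rfl⟩ := List.append_of_mem hu
    have heq : (L ++ G₁ ++ [u]) ++ G₂ = L ++ (G₁ ++ u :: G₂) := by simp
    refine ih G₂.length (by simp at hm; omega) (L ++ G₁ ++ [u]) G₂ u y v' w rfl
      (heq ▸ hC) (heq ▸ hk) ?_ ?_ hv'M (heq ▸ hv'C) huv' (heq ▸ hv'v.trans hvw) (heq ▸ hwC) hwy
    · rw [List.append_assoc, List.head?_append, hLh]; rfl
    · simp
  obtain ⟨-, hCn, hCc, -⟩ := id hC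
  have hLn := hCn.of_append_left
  have hLc : L.IsChain A := hCc.left_of_append
  -- a longest path from `y` to `x` on the vertices of the cycle through all of `L`
  obtain ⟨T, ⟨hTn, hTc, hTh, hTl, hTC, hLT⟩, hTmax⟩ := Set.exists_max_image
    {T : List V | T.Nodup ∧ T.IsChain A ∧ T.head? = some y ∧ T.getLast? = some x ∧
      T ⊆ L ++ G ∧ L ⊆ T} List.length
    (finite_setOf_nodup.subset fun _ h => h.1)
    ⟨L, hLn, hLc, hLh, hLl, List.subset_append_left _ _, List.Subset.refl _⟩
  -- some vertex of `M` on the cycle is missed by it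
  obtain ⟨u, huC, huM, huT⟩ : ∃ u ∈ L ++ G, u ∈ M ∧ u ∉ T := by
    by_contra! hall
    obtain ⟨P, hPn, hPc, hPh, hPl, hPS⟩ := hvw.exists_path hwC
    have hcyc := IsListCycle.of_append hTn hTc hTh hTl hPn hPc hPh hPl
      (fun a haT haP => hPS a haP (hTC haT)) hxv hwy
    have h₁ := hmax _ hcyc
    rw [List.countP_append] at h₁
    have h₂ : 0 < P.countP (· ∈ M) :=
      List.countP_pos_iff.2 ⟨v, List.mem_of_head? hPh, by simpa using hvM⟩
    have h₃ : (L ++ G).countP (· ∈ M) ≤ T.countP (· ∈ M) := by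
      rw [List.countP_eq_length_filter, List.countP_eq_length_filter]
      refine ((hCn.filter _).subperm fun a ha => ?_).length_le
      simp only [List.mem_filter, decide_eq_true_eq] at ha ⊢
      exact ⟨hall a ha.1 ha.2, ha.2⟩
    omega
  have huG : u ∈ G := (List.mem_append.1 huC).resolve_left fun h => huT (hLT h)
  have huv : ¬ A u v := hfrom u huG v hvM hvC .refl
  have hvu : ¬ A v u := hto u huG v .refl hvC
  have hTins : (T.map (arcCount A u)).sum ≤ T.length + 1 := by
    refine sum_arcCount_le_of_not_insertable A u T ?_
    rintro s a b t rfl ⟨hau, hub⟩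
    have hperm : (s ++ a :: u :: b :: t).Perm (u :: (s ++ a :: b :: t)) := by
      simpa using List.perm_middle (a := u) (l₁ := s ++ [a]) (l₂ := b :: t)
    have := hTmax (s ++ a :: u :: b :: t) ⟨hperm.nodup_iff.2 (List.nodup_cons.2 ⟨huT, hTn⟩),
      isChain_insert hTc hau hub, by simpa [List.head?_append] using hTh,
      by simpa [List.getLast?_append, List.getLast?_cons] using hTl,
      fun c hc => (List.mem_cons.1 (hperm.subset hc)).elim (fun h => h ▸ huC) fun h => hTC h,
      fun c hc => hperm.symm.subset (List.mem_cons_of_mem _ (hLT hc))⟩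
    simp at this
  have hLins : (L.map (arcCount A v)).sum ≤ L.length + 1 := by
    refine sum_arcCount_le_of_not_insertable A v L ?_
    rintro s a b t rfl ⟨hav, hvb⟩
    have := hmax (s ++ a :: v :: b :: (t ++ G))
      (IsListCycle.insert (by simpa using hC) (by simpa using hvC) hav hvb)
    simp [List.countP_append, List.countP_cons, hvM] at this hk
    omega
  have hGv : ∀ a ∈ G, arcCount A v a = 0 := fun a ha =>
    arcCount_eq_zero (hto a ha v .refl hvC) (hfrom a ha v hvM hvC .refl)
  have hCv : ∑ a ∈ (L ++ G).toFinset, arcCount A v a ≤ L.length + 1 := by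
    rw [List.sum_toFinset _ hCn, List.map_append, List.sum_append, List.map_congr_left hGv]
    simpa using hLins
  have hTC' : T.toFinset ⊆ (L ++ G).toFinset := fun a ha => by
    rw [List.mem_toFinset] at ha ⊢; exact hTC ha
  have hCcard : (L ++ G).toFinset.card = (L ++ G).length := List.toFinset_card_of_nodup hCn
  have hTcard : T.toFinset.card = T.length := List.toFinset_card_of_nodup hTn
  have hLTl : L.length ≤ T.length := (hLn.subperm hLT).length_le
  have huCT : u ∈ (L ++ G).toFinset \ T.toFinset := by
    simp only [Finset.mem_sdiff, List.mem_toFinset]; exact ⟨huC, huT⟩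
  have hCTcard : ((L ++ G).toFinset \ T.toFinset).card + T.length = (L ++ G).length := by
    rw [← hTcard, ← hCcard]; exact Finset.card_sdiff_add_card_eq_card hTC'
  have hCu : ∑ a ∈ (L ++ G).toFinset, arcCount A u a + 2 ≤
      T.length + 1 + 2 * ((L ++ G).toFinset \ T.toFinset).card := by
    rw [← Finset.sum_sdiff hTC', List.sum_toFinset _ hTn, ← Finset.add_sum_erase _ _ huCT,
      arcCount_eq_zero (hirr u) (hirr u)]
    have h₁ : ∑ a ∈ ((L ++ G).toFinset \ T.toFinset).erase u, arcCount A u a ≤ _ :=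
      Finset.sum_le_card_nsmul (((L ++ G).toFinset \ T.toFinset).erase u)
      (arcCount A u) 2 fun a _ => arcCount_le_two A u a
    have h₂ := Finset.card_erase_add_one huCT
    rw [smul_eq_mul] at h₁
    change _ + (T.map (arcCount A u)).sum + 2 ≤ _
    omega
  have hvR : v ∈ (L ++ G).toFinsetᶜ := by
    rw [Finset.mem_compl, List.mem_toFinset]; exact hvC
  have hR : ∑ a ∈ (L ++ G).toFinsetᶜ, (arcCount A v a + arcCount A u a) + 1 ≤
      2 * (L ++ G).toFinsetᶜ.card := by
    rw [← Finset.add_sum_erase _ _ hvR, arcCount_eq_zero (hirr v) (hirr v),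
      arcCount_eq_zero huv hvu]
    have h₁ : ∑ a ∈ (L ++ G).toFinsetᶜ.erase v, (arcCount A v a + arcCount A u a) ≤
        ∑ a ∈ (L ++ G).toFinsetᶜ.erase v, (2 + if a ∈ M then 0 else 1) := by
      refine Finset.sum_le_sum fun a ha => ?_
      have haC : a ∉ L ++ G := by simpa [not_or] using (Finset.mem_erase.1 ha).2
      have h₂ : ¬ (A v a ∧ A a u) := fun h =>
        hto u huG a (.single ⟨hvC, haC, h.1⟩) haC h.2
      have h₃ : a ∈ M → ¬ (A u a ∧ A a v) := fun haM h =>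
        hfrom u huG a haM haC (.single ⟨haC, hvC, h.2⟩) h.1
      unfold arcCount
      split_ifs <;> first | omega | tauto
    have h₂ := sum_ite_notMem_le_one hM ((L ++ G).toFinsetᶜ.erase v)
    have h₃ := Finset.card_erase_add_one hvR
    rw [Finset.sum_add_distrib (f := fun _ => 2), Finset.sum_const, smul_eq_mul] at h₁
    omega
  have h₁ := hdeg v hvM
  have h₂ := hdeg u huM
  rw [degree_eq_sum_arcCount, ← Finset.sum_add_sum_compl (L ++ G).toFinset] at h₁ h₂
  rw [Finset.sum_add_distrib] at hR
  have h₃ := Finset.card_add_card_compl (L ++ G).toFinset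
  rw [hCcard] at h₃
  omega

open Classical in
/-- A longest cycle with respect to `M` receives no arc from, and sends no arc to, a vertex of
`M` outside it. -/
theorem not_adj_of_maximal {V : Type*} [Fintype V] {A : V → V → Prop} {M : Set V}
    (hirr : ∀ x, ¬ A x x) (hstrong : IsStrong A) (hM : Mᶜ.Subsingleton)
    (hdeg : ∀ v ∈ M, Fintype.card V ≤ degree A v) {C : List V} (hC : IsListCycle A C)
    (hmax : ∀ l, IsListCycle A l → l.countP (· ∈ M) ≤ C.countP (· ∈ M)) {x v : V}
    (hx : x ∈ C) (hvM : v ∈ M) (hv : v ∉ C) : ¬ A x v := by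
  intro hxv
  obtain ⟨w, y, hvw, hw, hwy, hy⟩ := exists_reachIn_compl (S := {a | a ∈ C}) (hstrong v x) hv hx
  -- rotate the cycle so that it starts at `y`
  obtain ⟨s, t, rfl⟩ := List.append_of_mem (show y ∈ C from hy)
  have hp : (y :: t ++ s).Perm (s ++ y :: t) := List.perm_append_comm
  have hx' : x ∈ y :: t ++ s := hp.mem_iff.2 hx
  have hC' := hC.append_comm
  obtain ⟨L, G, hLG, hLh, hLl⟩ : ∃ L G, y :: t ++ s = L ++ G ∧ L.head? = some y ∧
      L.getLast? = some x := by
    obtain ⟨L, G, h⟩ := List.append_of_mem hx'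
    refine ⟨L ++ [x], G, by simp [h], ?_, by simp⟩
    have := congrArg List.head? h
    cases L <;> simp_all
  have hmem : ∀ a, a ∉ L ++ G ↔ a ∉ s ++ y :: t := fun a => by rw [← hLG, hp.mem_iff]
  refine not_bypass hirr hM hdeg hmax _ L G x y v w rfl (hLG ▸ hC') ?_ hLh hLl hvM
    ((hmem v).2 hv) hxv ?_ ((hmem w).2 hw) hwy
  · rw [← hLG, hp.countP_eq]
  · simp only [hmem]; exact hvw

/-- In a strong digraph in which at most one vertex lies outside `M`, and the vertices of `M`
have degree at least the order, some cycle contains `M`. -/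
theorem exists_listCycle_covering {V : Type*} [Fintype V] [Nontrivial V] {A : V → V → Prop}
    {M : Set V} (hirr : ∀ x, ¬ A x x) (hstrong : IsStrong A) (hM : Mᶜ.Subsingleton)
    (hdeg : ∀ v ∈ M, Fintype.card V ≤ degree A v) :
    ∃ C, IsListCycle A C ∧ ∀ v ∈ M, v ∈ C := by
  classical
  have hne : ∃ C, IsListCycle A C := by
    obtain ⟨a, b, hab⟩ := exists_pair_ne V
    obtain ⟨c, hca⟩ : ∃ c, A c a := by
      rcases Relation.ReflTransGen.cases_tail (hstrong b a) with h | ⟨c, -, h⟩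
      · exact absurd h hab
      · exact ⟨c, h⟩
    have hac : ReachIn A Set.univ a c :=
      Relation.ReflTransGen.mono (fun _ _ h => ⟨trivial, trivial, h⟩) _ _ (hstrong a c)
    obtain ⟨P, h₁, h₂, h₃, h₄, -⟩ := hac.exists_path trivial
    exact ⟨P, by rintro rfl; simp at h₃, h₁, h₂, by simp_all⟩
  obtain ⟨C, hC, hmax⟩ := Set.exists_max_image {l | IsListCycle A l}
    (fun l => l.countP (· ∈ M)) (finite_setOf_nodup.subset fun _ h => h.2.1) hne
  simp only [Set.mem_ofPred_eq] at hC hmax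
  refine ⟨C, hC, fun v hvM => ?_⟩
  by_contra hv
  have hfrom : ∀ x ∈ C, ∀ a ∈ M, a ∉ C → ¬ A x a := fun x hx a haM ha =>
    not_adj_of_maximal hirr hstrong hM hdeg hC hmax hx haM ha
  have hto : ∀ x ∈ C, ∀ a ∈ M, a ∉ C → ¬ A a x := fun x hx a haM ha =>
    not_adj_of_maximal (A := fun a b => A b a) (C := C.reverse) (fun x => hirr x)
      (fun x y => (Relation.reflTransGen_swap (r := A)).2 (hstrong y x)) hM
      (fun v hv => by rw [degree_swap]; exact hdeg v hv) (IsListCycle.reverse hC)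
      (fun l hl => by
        have := hmax _ hl.reverse
        rwa [List.countP_reverse] at this ⊢)
      (List.mem_reverse.2 hx) haM (fun h => ha (List.mem_reverse.1 h))
  obtain ⟨u, huC, huM⟩ : ∃ u ∈ C, u ∈ M := by
    by_contra! h
    obtain ⟨h₀, -, h₂, h₃⟩ := hC
    match C, h₀ with
    | [a], _ => exact hirr a (h₃ a (by simp) a (by simp))
    | a :: b :: t, _ =>
      have hab : A a b := (List.isChain_cons_cons.1 h₂).1
      exact hirr a (by rwa [← hM (h a (by simp)) (h b (by simp))] at hab)
  have huv : u ≠ v := fun h => hv (h ▸ huC)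
  have hsum : ∑ a, (arcCount A v a + arcCount A u a) ≤
      ∑ a ∈ (Finset.univ.erase u).erase v, (2 + 2 * if a ∈ M then 0 else 1) := by
    rw [← Finset.add_sum_erase _ _ (Finset.mem_univ u), ← Finset.add_sum_erase
      (Finset.univ.erase u) _ (Finset.mem_erase.2 ⟨huv.symm, Finset.mem_univ v⟩)]
    rw [arcCount_eq_zero (hirr u) (hirr u), arcCount_eq_zero (hirr v) (hirr v),
      arcCount_eq_zero (hto u huC v hvM hv) (hfrom u huC v hvM hv),
      arcCount_eq_zero (hfrom u huC v hvM hv) (hto u huC v hvM hv)]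
    simp only [zero_add]
    refine Finset.sum_le_sum fun a _ => ?_
    have h₁ := arcCount_le_two A v a
    have h₂ := arcCount_le_two A u a
    by_cases haC : a ∈ C
    · rw [arcCount_eq_zero (hto a haC v hvM hv) (hfrom a haC v hvM hv)]
      omega
    by_cases haM : a ∈ M
    · rw [arcCount_eq_zero (hfrom u huC a haM haC) (hto u huC a haM haC)]
      omega
    · simp only [haM, if_false]
      omega
  have h₁ := hdeg v hvM
  have h₂ := hdeg u huM
  rw [degree_eq_sum_arcCount] at h₁ h₂
  have h₃ := sum_ite_notMem_le_one hM ((Finset.univ.erase u).erase v)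
  rw [Finset.sum_add_distrib, Finset.sum_add_distrib, ← Finset.mul_sum, Finset.sum_const,
    smul_eq_mul] at hsum
  have h₄ := Finset.card_erase_add_one (Finset.mem_univ u)
  have h₅ := Finset.card_erase_add_one (Finset.mem_erase.2 ⟨huv.symm, Finset.mem_univ v⟩)
  rw [Finset.card_univ] at h₄
  omega

theorem IsListCycle.two_le_length {V : Type*} {A : V → V → Prop} (hirr : ∀ x, ¬ A x x)
    {C : List V} (hC : IsListCycle A C) : 2 ≤ C.length := by
  obtain ⟨h₀, -, -, h₃⟩ := hC
  match C, h₀ with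
  | [a], _ => exact absurd (h₃ a (by simp) a (by simp)) (hirr a)
  | a :: b :: t, _ => simp

theorem IsListCycle.isCycle_get {V : Type*} {A : V → V → Prop} (hirr : ∀ x, ¬ A x x)
    {C : List V} (hC : IsListCycle A C) : IsCycle A C.get := by
  have h2 := hC.two_le_length hirr
  obtain ⟨-, h₁, h₂, h₃⟩ := hC
  refine ⟨h2, List.nodup_iff_injective_get.1 h₁, fun i => ?_⟩
  simp only [List.get_eq_getElem]
  rcases Nat.lt_or_ge (i.val + 1) C.length with h | h
  · simp only [Nat.mod_eq_of_lt h]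
    exact List.isChain_iff_getElem.1 h₂ i h
  · have hi : i.val + 1 = C.length := le_antisymm i.isLt h
    simp only [hi, Nat.mod_self]
    refine h₃ _ ?_ _ ?_
    · simp [List.getLast?_eq_getElem?, show C.length - 1 = i by omega]
    · rw [List.head?_eq_getElem?]; simp

/-- Let `D` be a strong digraph of order `n ≥ 3` in which `n - 1` vertices have degree
at least `n`.  Then `D` is Hamiltonian or contains a directed cycle of length `n - 1`;
moreover, `D` has a directed cycle containing all the vertices of degree at least `n`. -/
theorem statement3 {V : Type*} [Fintype V] [DecidableEq V] (A : V → V → Prop)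
    (hirr : Irreflexive A)
    (n : ℕ) (hn3 : 3 ≤ n) (hcard : Fintype.card V = n)
    (hstrong : IsStrong A)
    (z : V)
    (hdeg : ∀ v : V, v ≠ z → n ≤ degree A v) :
    (IsHamiltonian A ∨ ∃ c : Fin (n - 1) → V, IsCycle A c) ∧
      ∃ (r : ℕ) (c : Fin r → V), IsCycle A c ∧
        ∀ v : V, n ≤ degree A v → v ∈ Set.range c := by
    classical
  have : Nontrivial V := Fintype.one_lt_card_iff_nontrivial.1 (by omega)
  obtain ⟨C, hC, hcov⟩ := exists_listCycle_covering (M := {v | n ≤ degree A v}) hirr hstrong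
    (fun a ha b hb => by
      rw [not_imp_comm.1 (hdeg a) ha, not_imp_comm.1 (hdeg b) hb])
    (fun v hv => hcard ▸ hv)
  have hcyc := hC.isCycle_get hirr
  refine ⟨?_, C.length, C.get, hcyc, fun v hv => ?_⟩
  · have hCcard := List.toFinset_card_of_nodup hC.2.1
    have hle : C.length ≤ n := hcard ▸ hC.2.1.length_le_card
    have hge : n - 1 ≤ C.length := by
      rw [← hCcard, ← hcard, ← Finset.card_univ, ← Finset.card_erase_of_mem (Finset.mem_univ z)]
      refine Finset.card_le_card fun v hv => ?_
      exact List.mem_toFinset.2 (hcov v (hdeg v (Finset.ne_of_mem_erase hv)))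
    rcases Nat.lt_or_ge C.length n with h | h
    · right
      obtain h : n - 1 = C.length := by omega
      rw [h]
      exact ⟨C.get, hcyc⟩
    · left
      have h : Fintype.card V = C.length := by omega
      rw [IsHamiltonian, h]
      exact ⟨C.get, hcyc, ((Fintype.bijective_iff_injective_and_card _).2
        ⟨hcyc.2.1, by simp [h]⟩).2⟩
  · obtain ⟨i, hi⟩ := List.get_of_mem (hcov v hv)
    exact ⟨i, hi⟩
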